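/- arXiv:2403.11939 — 3 statements merged into one kernel-verified Lean document; each statement's English description precedes it below -/
import Mathlib

section
/- Let M be a persistence module over the poset ℝ₊² = [0,∞) × [0,∞) and let P be a subposet of ℝ₊² such that the restriction M|_P is isomorphic to a direct sum A ⊕ B of persistence modules over P, where A is indecomposable and not thin. Then M is not interval decomposable. -/
/-- A (pointwise finite-dimensional) persistence module over a poset `P` with
coefficients in a field `K`: a functor from `P` to finite-dimensional `K`-vector
spaces. -/
structure PersMod (K : Type) [Field K] (P : Type) [Preorder P] where
  carrier : P → Type
  [acg : ∀ p, AddCommGroup (carrier p)]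
  [mod : ∀ p, Module K (carrier p)]
  [fd : ∀ p, FiniteDimensional K (carrier p)]
  map : ∀ {p q : P}, p ≤ q → (carrier p →ₗ[K] carrier q)
  map_id : ∀ p : P, map (le_refl p) = LinearMap.id
  map_comp : ∀ {p q r : P} (h₁ : p ≤ q) (h₂ : q ≤ r),
    map (h₁.trans h₂) = (map h₂).comp (map h₁)

attribute [instance] PersMod.acg PersMod.mod PersMod.fd

namespace PersMod

variable {K : Type} [Field K] {P : Type} [Preorder P]

/-- Pointwise direct sum of two persistence modules. -/
def dsum (M N : PersMod K P) : PersMod K P where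
  carrier p := M.carrier p × N.carrier p
  map h := (M.map h).prodMap (N.map h)
  map_id p := by
    show (M.map (le_refl p)).prodMap (N.map (le_refl p)) = LinearMap.id
    rw [M.map_id, N.map_id]; ext x <;> rfl
  map_comp {p q r} h₁ h₂ := by
    show (M.map (h₁.trans h₂)).prodMap (N.map (h₁.trans h₂)) =
      ((M.map h₂).prodMap (N.map h₂)).comp ((M.map h₁).prodMap (N.map h₁))
    rw [M.map_comp h₁ h₂, N.map_comp h₁ h₂]; ext x <;> rfl

/-- An isomorphism of persistence modules: a family of linear isomorphisms commuting
with the structure maps. -/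
structure Iso (M N : PersMod K P) where
  hom : ∀ p, M.carrier p ≃ₗ[K] N.carrier p
  naturality : ∀ {p q : P} (h : p ≤ q),
    ((hom q : M.carrier q →ₗ[K] N.carrier q)).comp (M.map h) =
      (N.map h).comp (hom p : M.carrier p →ₗ[K] N.carrier p)

/-- Two persistence modules are isomorphic if there is an isomorphism between them. -/
def Isomorphic (M N : PersMod K P) : Prop := Nonempty (Iso M N)

/-- A persistence module is thin if all its vector spaces have dimension at most 1. -/
def IsThin (M : PersMod K P) : Prop := ∀ p, Module.finrank K (M.carrier p) ≤ 1

/-- The zero persistence module: all vector spaces are `0`. -/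
def IsZero (M : PersMod K P) : Prop := ∀ p, ∀ x : M.carrier p, x = 0

/-- A persistence module is indecomposable if whenever it is isomorphic to a direct
sum `A ⊕ B`, one of `A`, `B` is zero. -/
def Indecomposable (M : PersMod K P) : Prop :=
  ∀ A B : PersMod K P, M.Isomorphic (A.dsum B) → A.IsZero ∨ B.IsZero

/-- The structure map of a pointwise direct sum of a family of persistence modules. -/
def familyMap {ι : Type} (f : ι → PersMod K P) {p q : P} (h : p ≤ q) :
    (Π₀ i, (f i).carrier p) →ₗ[K] Π₀ i, (f i).carrier q :=
  DFinsupp.mapRange.linearMap (fun i => (f i).map h)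

/-- An isomorphism from `M` to the pointwise direct sum of the family `f`. -/
structure IsoToDirectSum {ι : Type} (M : PersMod K P) (f : ι → PersMod K P) where
  hom : ∀ p, M.carrier p ≃ₗ[K] Π₀ i, (f i).carrier p
  naturality : ∀ {p q : P} (h : p ≤ q),
    ((hom q : M.carrier q →ₗ[K] Π₀ i, (f i).carrier q)).comp (M.map h) =
      (familyMap f h).comp (hom p : M.carrier p →ₗ[K] Π₀ i, (f i).carrier p)

/-- A persistence module is interval decomposable if it is isomorphic to a direct sum
of thin persistence modules. -/
def IntervalDecomposable (M : PersMod K P) : Prop :=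
  ∃ (ι : Type) (f : ι → PersMod K P),
    (∀ i, (f i).IsThin) ∧ Nonempty (IsoToDirectSum M f)

/-- Restriction of a persistence module to a subposet `Q ⊆ P`. -/
def restrict (M : PersMod K P) (Q : Set P) : PersMod K Q where
  carrier q := M.carrier q.1
  map {q₁ q₂} h := M.map (show (q₁ : P) ≤ (q₂ : P) from h)
  map_id q := M.map_id q.1
  map_comp h₁ h₂ := M.map_comp h₁ h₂

end PersMod

namespace PersMod

section aux
variable {K : Type} [Field K] {P : Type} [Preorder P]

/-- Submodule of a persistence module. -/
def subMod (A : PersMod K P) (N : ∀ p, Submodule K (A.carrier p))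
    (hN : ∀ {p q : P} (h : p ≤ q), ∀ x ∈ N p, A.map h x ∈ N q) : PersMod K P where
  carrier p := N p
  map h := (A.map h).restrict (hN h)
  map_id p := by
    ext x
    simp [A.map_id]
  map_comp h₁ h₂ := by
    ext x
    simp [A.map_comp h₁ h₂]

/-- The endomorphism ring. -/
def endRing (A : PersMod K P) : Subring (∀ p, Module.End K (A.carrier p)) where
  carrier := {φ | ∀ {p q : P} (h : p ≤ q) (x : A.carrier p), φ q (A.map h x) = A.map h (φ p x)}
  mul_mem' := by
    intro a b ha hb p q h x
    simp only [Pi.mul_apply, Module.End.mul_apply]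
    rw [hb h, ha h]
  one_mem' := by
    intro p q h x
    simp
  add_mem' := by
    intro a b ha hb p q h x
    simp only [Pi.add_apply, LinearMap.add_apply, map_add]
    rw [hb h, ha h]
  zero_mem' := by
    intro p q h x
    simp
  neg_mem' := by
    intro a ha p q h x
    simp only [Pi.neg_apply, LinearMap.neg_apply, map_neg]
    rw [ha h]

theorem injective_of_isUnit (A : PersMod K P) (a : A.endRing) (ha : IsUnit a) (p : P) :
    Function.Injective (a.1 p) := by
  obtain ⟨b, hb⟩ := ha.exists_left_inv
  have h1 : b.1 p * a.1 p = 1 := by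
    have := congrArg (fun c : A.endRing => c.1 p) hb
    simpa using this
  intro x y hxy
  have hx := LinearMap.congr_fun h1 x
  have hy := LinearMap.congr_fun h1 y
  simp only [Module.End.mul_apply, Module.End.one_apply] at hx hy
  rw [← hx, ← hy, hxy]

theorem isUnit_of_injective (A : PersMod K P) (a : A.endRing)
    (ha : ∀ p, Function.Injective (a.1 p)) : IsUnit a := by
  let e : ∀ p, A.carrier p ≃ₗ[K] A.carrier p := fun p =>
    LinearEquiv.ofInjectiveEndo (a.1 p) (ha p)
  have he : ∀ p x, e p x = a.1 p x := fun p x => rfl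
  let b : A.endRing := ⟨fun p => (e p).symm.toLinearMap, by
    intro p q h x
    apply (e q).injective
    change e q ((e q).symm _) = e q (A.map h ((e p).symm x))
    rw [LinearEquiv.apply_symm_apply, he, a.2 h, ← he, LinearEquiv.apply_symm_apply]⟩
  refine ⟨⟨a, b, ?_, ?_⟩, rfl⟩
  · apply Subtype.ext
    funext p
    ext x
    exact (e p).apply_symm_apply x
  · apply Subtype.ext
    funext p
    ext x
    exact (e p).symm_apply_apply x

theorem pow_nat (A : PersMod K P) (a : A.endRing) (n : ℕ) {p q : P} (h : p ≤ q)
    (x : A.carrier p) : ((a.1 q) ^ n) (A.map h x) = A.map h (((a.1 p) ^ n) x) := by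
  have := (a ^ n).2 h x
  simpa using this

theorem isUnit_or (A : PersMod K P) (hA : A.Indecomposable) (a : A.endRing) :
    IsUnit a ∨ IsUnit (1 - a) := by
  let N : ∀ p, Submodule K (A.carrier p) := fun p => ⨆ n, LinearMap.ker ((a.1 p) ^ n)
  let I : ∀ p, Submodule K (A.carrier p) := fun p => ⨅ n, LinearMap.range ((a.1 p) ^ n)
  have hc : ∀ p, IsCompl (N p) (I p) := fun p =>
    LinearMap.isCompl_iSup_ker_pow_iInf_range_pow (a.1 p)
  have hN : ∀ {p q : P} (h : p ≤ q), ∀ x ∈ N p, A.map h x ∈ N q := by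
    intro p q h
    change N p ≤ (N q).comap (A.map h)
    refine iSup_le fun n x hx => ?_
    refine Submodule.mem_iSup_of_mem n ?_
    rw [LinearMap.mem_ker] at hx ⊢
    rw [A.pow_nat, hx, map_zero]
  have hI : ∀ {p q : P} (h : p ≤ q), ∀ x ∈ I p, A.map h x ∈ I q := by
    intro p q h x hx
    rw [Submodule.mem_iInf] at hx ⊢
    intro n
    obtain ⟨y, rfl⟩ := hx n
    exact ⟨A.map h y, A.pow_nat a n h y⟩
  have hiso : A.Isomorphic ((A.subMod N hN).dsum (A.subMod I hI)) := by
    refine ⟨⟨fun p => (Submodule.prodEquivOfIsCompl (N p) (I p) (hc p)).symm, ?_⟩⟩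
    intro p q h
    ext1 x
    obtain ⟨y, rfl⟩ := (Submodule.prodEquivOfIsCompl (N p) (I p) (hc p)).surjective x
    apply (Submodule.prodEquivOfIsCompl (N q) (I q) (hc q)).injective
    refine (LinearEquiv.apply_symm_apply _ _).trans ?_
    refine Eq.trans ?_ (congrArg (fun z => Submodule.prodEquivOfIsCompl (N q) (I q) (hc q)
      (((A.subMod N hN).dsum (A.subMod I hI)).map h z))
      (LinearEquiv.symm_apply_apply
        (Submodule.prodEquivOfIsCompl (N p) (I p) (hc p)) y).symm)
    obtain ⟨y1, y2⟩ := y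
    change A.map h ((y1 : A.carrier p) + y2) = A.map h y1 + A.map h y2
    rw [map_add]
  rcases hA _ _ hiso with h0 | h0
  · left
    apply A.isUnit_of_injective
    intro p
    rw [injective_iff_map_eq_zero]
    intro x hx
    have hm : x ∈ N p := Submodule.mem_iSup_of_mem 1 (by simpa using hx)
    exact congrArg Subtype.val (h0 p ⟨x, hm⟩)
  · right
    apply A.isUnit_of_injective
    intro p
    rw [injective_iff_map_eq_zero]
    intro x hx
    have hx' : a.1 p x = x := by
      have : x - a.1 p x = 0 := hx
      exact (sub_eq_zero.mp this).symm
    have hm : x ∈ I p := by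
      rw [Submodule.mem_iInf]
      intro n
      refine ⟨x, ?_⟩
      induction n with
      | zero => simp
      | succ k ih => rw [pow_succ, Module.End.mul_apply, hx', ih]
    exact congrArg Subtype.val (h0 p ⟨x, hm⟩)

theorem isUnit_add (A : PersMod K P) (hA : A.Indecomposable) (a b : A.endRing)
    (h : IsUnit (a + b)) : IsUnit a ∨ IsUnit b := by
  obtain ⟨u, hu⟩ := h
  have h1 : (1 : A.endRing) - (↑u⁻¹ * a) = ↑u⁻¹ * b := by
    have : (↑u⁻¹ : A.endRing) * (a + b) = 1 := by rw [← hu]; simp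
    rw [← this, mul_add]; abel
  rcases A.isUnit_or hA (↑u⁻¹ * a) with h | h
  · left; exact (Units.isUnit_units_mul _ _).mp h
  · right; rw [h1] at h; exact (Units.isUnit_units_mul _ _).mp h

theorem isUnit_sum (A : PersMod K P) (hA : A.Indecomposable) {ι : Type} (F : Finset ι)
    (φ : ι → A.endRing) (h0 : ¬ IsUnit (0 : A.endRing)) (h : IsUnit (∑ i ∈ F, φ i)) :
    ∃ i, IsUnit (φ i) := by
  classical
  induction F using Finset.induction_on with
  | empty => exact absurd (by simpa using h) h0
  | insert i F hi ih =>
    rw [Finset.sum_insert hi] at h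
    rcases A.isUnit_add hA _ _ h with h | h
    · exact ⟨i, h⟩
    · exact ih h

theorem thin_of_summand (A : PersMod K P) (hA : A.Indecomposable) {ι : Type}
    (f : ι → P → Type) [∀ i p, AddCommGroup (f i p)] [∀ i p, Module K (f i p)]
    [∀ i p, FiniteDimensional K (f i p)]
    (hf : ∀ i p, Module.finrank K (f i p) ≤ 1)
    (s : ∀ i p, A.carrier p →ₗ[K] f i p) (t : ∀ i p, f i p →ₗ[K] A.carrier p)
    (hst : ∀ i {p q : P} (h : p ≤ q) x, t i q (s i q (A.map h x)) = A.map h (t i p (s i p x)))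
    (hsum : ∀ p x, ∃ F : Finset ι, ∑ i ∈ F, t i p (s i p x) = x) : A.IsThin := by
  intro p
  by_contra hp
  have : Nontrivial (A.carrier p) := Module.nontrivial_of_finrank_pos (R := K) (by omega)
  obtain ⟨x, hx⟩ := exists_ne (0 : A.carrier p)
  let φ : ι → A.endRing := fun i => ⟨fun p => (t i p).comp (s i p), fun h x => hst i h x⟩
  obtain ⟨F, hF⟩ := hsum p x
  have hFx : (∑ i ∈ F, φ i).1 p x = x := by
    have h2 : (∑ i ∈ F, φ i).1 p = ∑ i ∈ F, (t i p).comp (s i p) := by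
      rw [AddSubmonoidClass.coe_finsetSum, Finset.sum_apply]
    rw [h2, LinearMap.sum_apply]
    exact hF
  have hz : ∀ a : A.endRing, IsUnit a → a.1 p x ≠ 0 := fun a ha h =>
    hx (A.injective_of_isUnit a ha p (by rw [h, map_zero]))
  have hu : IsUnit (∑ i ∈ F, φ i) := by
    rcases A.isUnit_or hA (∑ i ∈ F, φ i) with h | h
    · exact h
    · exfalso
      apply hz _ h
      change x - (∑ i ∈ F, φ i).1 p x = 0
      rw [hFx, sub_self]
  obtain ⟨i, hi⟩ := A.isUnit_sum hA F φ (fun h => hz _ h rfl) hu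
  have hinj := A.injective_of_isUnit _ hi p
  have hs : Function.Injective (s i p) := by
    have : Function.Injective (t i p ∘ s i p) := hinj
    exact this.of_comp
  exact hp ((LinearMap.finrank_le_finrank_of_injective hs).trans (hf i p))

end aux
end PersMod

open scoped NNReal

/-- if the restriction of `M` (a persistence module over `ℝ₊²`) to some
subposet `P` has a direct summand `A` that is indecomposable and not thin, then `M` is
not interval decomposable. -/
theorem not_interval_decomposable_of_restriction (K : Type) [Field K]
    (M : PersMod K (ℝ≥0 × ℝ≥0)) (P : Set (ℝ≥0 × ℝ≥0))
    (A B : PersMod K P) (h : (M.restrict P).Isomorphic (A.dsum B))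
    (hA : A.Indecomposable) (hnotthin : ¬ A.IsThin) :
    ¬ M.IntervalDecomposable := by
  classical
  rintro ⟨ι, f, hf, ⟨D⟩⟩
  obtain ⟨e⟩ := h
  apply hnotthin
  let E : ∀ p : P, M.carrier p.1 ≃ₗ[K] (A.carrier p × B.carrier p) := fun p => e.hom p
  have hE : ∀ {p q : P} (h : p ≤ q) (x : M.carrier p.1),
      E q (M.map (show p.1 ≤ q.1 from h) x) = (A.map h (E p x).1, B.map h (E p x).2) :=
    fun h x => LinearMap.congr_fun (e.naturality h) x
  have hE' : ∀ {p q : P} (h : p ≤ q) (x : A.carrier p),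
      (E q).symm (A.map h x, 0) = M.map (show p.1 ≤ q.1 from h) ((E p).symm (x, 0)) := by
    intro p q h x
    rw [LinearEquiv.symm_apply_eq, hE, LinearEquiv.apply_symm_apply, map_zero]
  have hD : ∀ {p q : ℝ≥0 × ℝ≥0} (h : p ≤ q) (x : M.carrier p),
      D.hom q (M.map h x) = PersMod.familyMap f h (D.hom p x) :=
    fun h x => LinearMap.congr_fun (D.naturality h) x
  have hD' : ∀ {p q : ℝ≥0 × ℝ≥0} (h : p ≤ q) x,
      (D.hom q).symm (PersMod.familyMap f h x) = M.map h ((D.hom p).symm x) := by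
    intro p q h x
    rw [LinearEquiv.symm_apply_eq, hD, LinearEquiv.apply_symm_apply]
  let s : ∀ (i : ι) (p : P), A.carrier p →ₗ[K] (f i).carrier p.1 := fun i p =>
    (DFinsupp.lapply i).comp ((D.hom p.1).toLinearMap.comp
      ((E p).symm.toLinearMap.comp (LinearMap.inl K _ _)))
  let t : ∀ (i : ι) (p : P), (f i).carrier p.1 →ₗ[K] A.carrier p := fun i p =>
    (LinearMap.fst K _ _).comp ((E p).toLinearMap.comp
      ((D.hom p.1).symm.toLinearMap.comp (DFinsupp.lsingle (R := K) (M := fun i => (f i).carrier p.1) i)))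
  have hs : ∀ i p x, s i p x = D.hom p.1 ((E p).symm (x, 0)) i := fun _ _ _ => rfl
  have ht : ∀ i p x, t i p x = (E p ((D.hom p.1).symm (DFinsupp.single i x))).1 :=
    fun _ _ _ => rfl
  refine A.thin_of_summand hA (fun i p => (f i).carrier p.1) (fun i p => hf i p.1) s t ?_ ?_
  · intro i p q h x
    have h1 : s i q (A.map h x) = (f i).map (show p.1 ≤ q.1 from h) (s i p x) := by
      rw [hs, hs, hE', hD]
      simp [PersMod.familyMap]
    have h2 : ∀ y, t i q ((f i).map (show p.1 ≤ q.1 from h) y) = A.map h (t i p y) := by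
      intro y
      rw [ht, ht]
      have : DFinsupp.single i ((f i).map (show p.1 ≤ q.1 from h) y) =
          PersMod.familyMap f (show p.1 ≤ q.1 from h) (DFinsupp.single i y) := by
        simp [PersMod.familyMap]
      rw [this, hD', hE]
    rw [h1, h2]
  · intro p x
    refine ⟨(D.hom p.1 ((E p).symm (x, 0))).support, ?_⟩
    simp only [ht, hs]
    rw [← Prod.fst_sum, ← map_sum, ← map_sum]
    have := DFinsupp.sum_single (f := D.hom p.1 ((E p).symm (x, 0)))
    rw [DFinsupp.sum] at this
    rw [this]
    simp
end

section
/- Let d ≥ 2 and let v₀, v₁, …, v_d ∈ ℝ^d be the vertices of a regular d-simplex Σ with unit edge length, let σ be the facet {v₁, …, v_d}, and let u be the unit vector at v₀ pointing perpendicularly toward the hyperplane spanned by σ. For δ ≥ 0 write Σ_δ for the simplex with vertices v₀ + δu, v₁, …, v_d, let R_δ be the minimum enclosing ball radius of the vertex set of Σ_δ, and let r_δ be the minimum enclosing ball radius of a facet of Σ_δ containing the vertex v₀ + δu (i.e., of {v₀ + δu} ∪ (σ \ {vⱼ}) for any j). Then there exists δ₀ > 0 such that for all 0 < δ' < δ <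 δ₀: r_δ < r_{δ'} < r and R_δ < R_{δ'} < R, where r = √((d−1)/(2d)) and R = √(d/(2(d+1))). -/
open Metric Finset

/-- Minimum enclosing ball radius of a set `T` in `ℝ^d`: the infimum over centers `c`
of the maximal distance from `c` to a point of `T`. -/
noncomputable def mebRadius (d : ℕ) (T : Set (EuclideanSpace ℝ (Fin d))) : ℝ :=
  ⨅ c : EuclideanSpace ℝ (Fin d), ⨆ p ∈ T, dist c p

theorem aux_stewart {E : Type*} [NormedAddCommGroup E] [InnerProductSpace ℝ E]
    (x y z : E) (t : ℝ) :
    ‖(x + t • (y - x)) - z‖ ^ 2 =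
      (1 - t) * ‖x - z‖ ^ 2 + t * ‖y - z‖ ^ 2 - t * (1 - t) * ‖y - x‖ ^ 2 := by
  have h1 : (x + t • (y - x)) - z = (x - z) + t • ((y - z) - (x - z)) := by
    simp only [sub_sub_sub_cancel_right]; abel
  have h2 : y - x = (y - z) - (x - z) := by abel
  rw [h1, h2]
  generalize x - z = a
  generalize y - z = c
  rw [norm_add_sq_real, norm_smul, mul_pow, norm_sub_sq_real, inner_smul_right, inner_sub_right,
    real_inner_self_eq_norm_sq, real_inner_comm c a, Real.norm_eq_abs, sq_abs]
  ring

theorem aux_cent {E ι : Type*} [NormedAddCommGroup E] [InnerProductSpace ℝ E]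
    (S : Finset ι) (w : ι → E) (g : E) (hS : S.Nonempty)
    (hg : g = ((S.card : ℝ))⁻¹ • ∑ i ∈ S, w i) (q : E) :
    ∑ i ∈ S, ‖q - w i‖ ^ 2 = S.card * ‖q - g‖ ^ 2 + ∑ i ∈ S, ‖g - w i‖ ^ 2 := by
  have hk : (S.card : ℝ) ≠ 0 := by
    have := hS.card_pos
    positivity
  have h0 : ∑ i ∈ S, (g - w i) = 0 := by
    rw [Finset.sum_sub_distrib, Finset.sum_const, ← Nat.cast_smul_eq_nsmul ℝ, hg, smul_smul,
      mul_inv_cancel₀ hk, one_smul, sub_self]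
  have h1 : ∀ i ∈ S, ‖q - w i‖ ^ 2 =
      ‖q - g‖ ^ 2 + 2 * inner ℝ (q - g) (g - w i) + ‖g - w i‖ ^ 2 := by
    intro i _
    rw [← norm_add_sq_real, sub_add_sub_cancel]
  rw [Finset.sum_congr rfl h1, Finset.sum_add_distrib, Finset.sum_add_distrib, ← Finset.mul_sum,
    ← inner_sum, h0]
  simp

theorem aux_circ {E ι : Type*} [NormedAddCommGroup E] [InnerProductSpace ℝ E] [DecidableEq ι]
    (S : Finset ι) (w : ι → E) (g : E) (hS : S.Nonempty)
    (hg : g = ((S.card : ℝ))⁻¹ • ∑ i ∈ S, w i)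
    (hw : ∀ i ∈ S, ∀ j ∈ S, i ≠ j → dist (w i) (w j) = 1) :
    ∀ i ∈ S, ‖g - w i‖ ^ 2 = ((S.card : ℝ) - 1) / (2 * S.card) := by
  have hk : (0 : ℝ) < S.card := by
    have := hS.card_pos
    positivity
  have key := aux_cent S w g hS hg
  set B := ∑ i ∈ S, ‖g - w i‖ ^ 2 with hB
  have h1 : ∀ i ∈ S, ‖g - w i‖ ^ 2 = ((S.card : ℝ) - 1 - B) / S.card := by
    intro i hi
    have h := key (w i)
    have h2 : ∑ j ∈ S, ‖w i - w j‖ ^ 2 = (S.card : ℝ) - 1 := by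
      rw [← Finset.add_sum_erase S _ hi]
      have : ∀ j ∈ S.erase i, ‖w i - w j‖ ^ 2 = 1 := by
        intro j hj
        rw [Finset.mem_erase] at hj
        rw [← dist_eq_norm, hw i hi j hj.2 hj.1.symm, one_pow]
      rw [Finset.sum_congr rfl this]
      simp [Finset.card_erase_of_mem hi, Nat.cast_sub hS.card_pos]
    rw [h2, norm_sub_rev (w i) g] at h
    rw [eq_div_iff hk.ne']
    linarith
  have h2 : B = S.card * (((S.card : ℝ) - 1 - B) / S.card) := by
    conv_lhs => rw [hB, Finset.sum_congr rfl h1]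
    simp
  have h3 : B = ((S.card : ℝ) - 1) / 2 := by
    rw [mul_div_cancel₀ _ hk.ne'] at h2
    linarith
  intro i hi
  rw [h1 i hi, h3, div_eq_div_iff hk.ne' (by linarith)]
  ring

theorem aux_meb {ι : Type*} [DecidableEq ι] (d : ℕ) (S : Finset ι)
    (w : ι → EuclideanSpace ℝ (Fin d)) (hS : S.Nonempty)
    (hw : ∀ i ∈ S, ∀ j ∈ S, i ≠ j → dist (w i) (w j) = 1)
    (p : EuclideanSpace ℝ (Fin d)) (L : ℝ) (hp : ∀ i ∈ S, ‖p - w i‖ ^ 2 = L)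
    (hL : ((S.card : ℝ) - 1) / S.card < L) :
    mebRadius d ({p} ∪ w '' (S : Set ι)) =
      Real.sqrt (L ^ 2 / (4 * (L - ((S.card : ℝ) - 1) / (2 * S.card)))) := by
  have hk : (1 : ℝ) ≤ S.card := by exact_mod_cast hS.card_pos
  obtain ⟨g, hg⟩ : ∃ g, g = ((S.card : ℝ))⁻¹ • ∑ i ∈ S, w i := ⟨_, rfl⟩
  have hc := aux_circ S w g hS hg hw
  have key := aux_cent S w g hS hg
  obtain ⟨a, ha⟩ : ∃ a, a = ((S.card : ℝ) - 1) / (2 * S.card) := ⟨_, rfl⟩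
  have ha2 : ((S.card : ℝ) - 1) / S.card = 2 * a := by rw [ha]; field_simp
  have ha0 : 0 ≤ a := by rw [ha]; apply div_nonneg <;> linarith
  rw [← ha] at hc ⊢
  rw [ha2] at hL
  have hsum : ∀ q, ∑ i ∈ S, ‖q - w i‖ ^ 2 = S.card * (‖q - g‖ ^ 2 + a) := by
    intro q
    rw [key q, Finset.sum_congr rfl hc, Finset.sum_const, nsmul_eq_mul, mul_add]
  have hH : ‖p - g‖ ^ 2 = L - a := by
    have h := hsum p
    rw [Finset.sum_congr rfl hp, Finset.sum_const, nsmul_eq_mul] at h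
    have := mul_left_cancel₀ (by linarith) h
    linarith
  have hHp : 0 < L - a := by linarith
  obtain ⟨t, ht⟩ : ∃ t, t = (L - 2 * a) / (2 * (L - a)) := ⟨_, rfl⟩
  have ht0 : 0 < t := by rw [ht]; apply div_pos <;> linarith
  have ht1 : t < 1 := by rw [ht, div_lt_one (by linarith)]; linarith
  have hta : t * (2 * (L - a)) = L - 2 * a := by rw [ht]; field_simp
  obtain ⟨ρ, hρ⟩ : ∃ ρ, ρ = L ^ 2 / (4 * (L - a)) := ⟨_, rfl⟩
  have hρ1 : ρ = (1 - t) ^ 2 * (L - a) := by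
    rw [hρ, ht]; field_simp; ring
  have hρ0 : 0 ≤ ρ := by rw [hρ1]; positivity
  rw [← hρ]
  have hfin : ({p} ∪ w '' (S : Set ι)).Finite :=
    (Set.finite_singleton p).union (S.finite_toSet.image w)
  have hbdd : ∀ c, BddAbove (Set.range fun x => ⨆ _ : x ∈ ({p} ∪ w '' (S : Set ι)), dist c x) := by
    intro c
    obtain ⟨M, hM⟩ := (hfin.image (dist c)).bddAbove
    refine ⟨max M 0, ?_⟩
    rintro _ ⟨x, rfl⟩
    refine Real.iSup_le (fun hx => ?_) (le_max_right _ _)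
    exact (hM (Set.mem_image_of_mem _ hx)).trans (le_max_left _ _)
  have hle : ∀ c, ∀ x ∈ ({p} ∪ w '' (S : Set ι)),
      dist c x ≤ ⨆ x ∈ ({p} ∪ w '' (S : Set ι)), dist c x := by
    intro c x hx
    refine le_trans ?_ (le_ciSup (hbdd c) x)
    rw [ciSup_pos hx]
  unfold mebRadius
  apply le_antisymm
  · refine (ciInf_le ⟨0, ?_⟩ (g + t • (p - g))).trans ?_
    · rintro _ ⟨c, rfl⟩
      exact Real.iSup_nonneg fun x => Real.iSup_nonneg fun _ => dist_nonneg
    · refine Real.iSup_le (fun x => Real.iSup_le (fun hx => ?_) (Real.sqrt_nonneg _))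
        (Real.sqrt_nonneg _)
      apply Real.le_sqrt_of_sq_le
      rw [dist_eq_norm, aux_stewart, hH]
      rcases hx with hx | ⟨i, hi, rfl⟩
      · rw [Set.mem_singleton_iff] at hx
        subst hx
        rw [norm_sub_rev g x, hH, sub_self, norm_zero, hρ1]
        apply le_of_eq; ring
      · rw [hc i hi, hp i hi, hρ1]
        apply le_of_eq
        linear_combination hta
  · refine le_ciInf fun c => ?_
    by_contra hlt
    push Not at hlt
    have hall : ∀ x ∈ ({p} ∪ w '' (S : Set ι)), ‖c - x‖ ^ 2 < ρ := by
      intro x hx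
      rw [← dist_eq_norm]
      exact (Real.lt_sqrt dist_nonneg).1 ((hle c x hx).trans_lt hlt)
    have h1 := hall p (Or.inl rfl)
    have h2 : ‖c - g‖ ^ 2 + a < ρ := by
      have : ∑ i ∈ S, ‖c - w i‖ ^ 2 < ∑ i ∈ S, ρ :=
        Finset.sum_lt_sum_of_nonempty hS fun i hi => hall _ (Or.inr ⟨i, hi, rfl⟩)
      rw [hsum, Finset.sum_const, nsmul_eq_mul] at this
      exact lt_of_mul_lt_mul_left this (by linarith)
    have h3 := aux_stewart g p c t
    rw [hH, norm_sub_rev g c, norm_sub_rev p c] at h3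
    have h4 := sq_nonneg ‖g + t • (p - g) - c‖
    have h5 := mul_lt_mul_of_pos_left h1 ht0
    have h6 := mul_lt_mul_of_pos_left h2 (sub_pos.2 ht1)
    have h7 : ρ = t * (1 - t) * (L - a) + (1 - t) * a := by
      rw [hρ1]; linear_combination (-(1 - t)) * hta
    linarith

theorem aux_mono (a L L' : ℝ) (ha : 0 ≤ a) (h : 2 * a < L) (h' : L < L') :
    Real.sqrt (L ^ 2 / (4 * (L - a))) < Real.sqrt (L' ^ 2 / (4 * (L' - a))) := by
  apply Real.sqrt_lt_sqrt
  · apply div_nonneg (sq_nonneg _); linarith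
  · rw [div_lt_div_iff₀ (by linarith) (by linarith)]
    have h1 : 0 < L' - L := by linarith
    have h2 : 0 < L * L' - a * (L + L') := by
      nlinarith [mul_pos (sub_pos.2 h) (sub_pos.2 (h.trans h'))]
    nlinarith [mul_pos h1 h2]

/-- push the apex `v₀` of a regular unit-edge `d`-simplex a distance `δ`
towards the hyperplane of the opposite facet `σ`, along the inward unit normal `u`
(which points from `v₀` to the centroid of `σ`). Writing `R_δ` for the minimum
enclosing ball radius of the perturbed vertex set and `r_δ` for that of any facet
containing the moved vertex, there is a `δ₀ > 0` such that for all `0 < δ' < δ < δ₀`: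
`r_δ < r_{δ'} < r = √((d−1)/(2d))` and `R_δ < R_{δ'} < R = √(d/(2(d+1)))`. -/
theorem perturbed_simplex_radii (d : ℕ) (hd : 2 ≤ d)
    (v : Fin (d + 1) → EuclideanSpace ℝ (Fin d))
    (hv : ∀ i j, i ≠ j → dist (v i) (v j) = 1)
    -- the centroid of the facet σ = {v₁, …, v_d}
    (b : EuclideanSpace ℝ (Fin d))
    (hb : b = ((d : ℝ))⁻¹ • ∑ i ∈ Finset.univ.erase (0 : Fin (d + 1)), v i)
    -- the unit vector at v₀ pointing perpendicularly towards the hyperplane of σ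
    (u : EuclideanSpace ℝ (Fin d)) (hu : u = ‖b - v 0‖⁻¹ • (b - v 0)) :
    ∃ δ₀ : ℝ, 0 < δ₀ ∧ ∀ δ' δ : ℝ, 0 < δ' → δ' < δ → δ < δ₀ →
      (∀ j : Fin (d + 1), j ≠ 0 →
        mebRadius d ({v 0 + δ • u} ∪ v '' {i | i ≠ 0 ∧ i ≠ j}) <
          mebRadius d ({v 0 + δ' • u} ∪ v '' {i | i ≠ 0 ∧ i ≠ j}) ∧
        mebRadius d ({v 0 + δ' • u} ∪ v '' {i | i ≠ 0 ∧ i ≠ j}) <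
          Real.sqrt (((d : ℝ) - 1) / (2 * (d : ℝ)))) ∧
      (mebRadius d ({v 0 + δ • u} ∪ v '' {i | i ≠ 0}) <
          mebRadius d ({v 0 + δ' • u} ∪ v '' {i | i ≠ 0}) ∧
        mebRadius d ({v 0 + δ' • u} ∪ v '' {i | i ≠ 0}) <
          Real.sqrt ((d : ℝ) / (2 * ((d : ℝ) + 1)))) := by
  have hd0 : (2 : ℝ) ≤ d := by exact_mod_cast hd
  have hcard : (Finset.univ.erase (0 : Fin (d + 1))).card = d := by simp
  have hne : (Finset.univ.erase (0 : Fin (d + 1))).Nonempty := by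
    rw [← Finset.card_pos, hcard]; omega
  have hb' : b = (((Finset.univ.erase (0 : Fin (d + 1))).card : ℝ))⁻¹ •
      ∑ i ∈ Finset.univ.erase (0 : Fin (d + 1)), v i := by rw [hcard, hb]
  have hcirc := aux_circ _ v b hne hb' (fun i _ j _ hij => hv i j hij)
  have hcent := aux_cent _ v b hne hb' (v 0)
  rw [Finset.sum_congr rfl hcirc] at hcent
  have h01 : ∀ i ∈ Finset.univ.erase (0 : Fin (d + 1)), ‖v 0 - v i‖ ^ 2 = 1 := by
    intro i hi
    rw [← dist_eq_norm, hv 0 i (Finset.ne_of_mem_erase hi).symm, one_pow]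
  rw [Finset.sum_congr rfl h01, Finset.sum_const, Finset.sum_const, hcard, nsmul_eq_mul,
    nsmul_eq_mul, norm_sub_rev] at hcent
  rw [hcard] at hcirc
  obtain ⟨h, hh⟩ : ∃ h, h = ‖b - v 0‖ := ⟨_, rfl⟩
  rw [← hh] at hcent hu
  have hh0 : 0 ≤ h := by rw [hh]; exact norm_nonneg _
  have hh2 : h ^ 2 = 1 - ((d : ℝ) - 1) / (2 * d) := by
    have : (d : ℝ) * h ^ 2 = d * (1 - ((d : ℝ) - 1) / (2 * d)) := by linarith
    exact mul_left_cancel₀ (by linarith) this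
  have hhe : h ^ 2 = 1 / 2 + 1 / (2 * d) := by rw [hh2]; field_simp; ring
  have hdi : 1 / (2 * (d : ℝ)) ≤ 1 / 4 := by
    apply one_div_le_one_div_of_le <;> linarith
  have hdi0 : 0 < 1 / (2 * (d : ℝ)) := by positivity
  have hh1 : h ≤ 1 := by nlinarith
  have hhh : 1 / 2 ≤ h := by nlinarith
  have hLv : ∀ δ : ℝ, ∀ i : Fin (d + 1), i ≠ 0 →
      ‖v 0 + δ • u - v i‖ ^ 2 = 1 - 2 * δ * h + δ ^ 2 := by
    intro δ i hi
    have hi' : i ∈ Finset.univ.erase (0 : Fin (d + 1)) := by simp [hi]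
    rw [hu, smul_smul, aux_stewart, h01 i hi', hcirc i hi', ← hh]
    have h1 : ((d : ℝ) - 1) / (2 * d) = 1 - h ^ 2 := by linarith
    rw [h1]
    have : h ≠ 0 := by linarith
    field_simp
    ring
  have hL1 : ∀ δ : ℝ, 0 < δ → δ < 1 / (2 * d) → ((d : ℝ) - 1) / d < 1 - 2 * δ * h + δ ^ 2 := by
    intro δ h1 h2
    have h3 : ((d : ℝ) - 1) / d = 1 - 2 * (1 / (2 * d)) := by field_simp
    rw [h3]
    nlinarith
  have hmono : ∀ δ' δ : ℝ, 0 ≤ δ' → δ' < δ → δ < 1 / (2 * d) →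
      1 - 2 * δ * h + δ ^ 2 < 1 - 2 * δ' * h + δ' ^ 2 := by
    intro δ' δ h1 h2 h3
    nlinarith
  have main : ∀ S : Finset (Fin (d + 1)), S.Nonempty → (∀ i ∈ S, i ≠ 0) → S.card ≤ d →
      ∀ δ' δ : ℝ, 0 < δ' → δ' < δ → δ < 1 / (2 * (d : ℝ)) →
      mebRadius d ({v 0 + δ • u} ∪ v '' (S : Set (Fin (d + 1)))) <
          mebRadius d ({v 0 + δ' • u} ∪ v '' (S : Set (Fin (d + 1)))) ∧
        mebRadius d ({v 0 + δ' • u} ∪ v '' (S : Set (Fin (d + 1)))) <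
          Real.sqrt ((S.card : ℝ) / (2 * ((S.card : ℝ) + 1))) := by
    intro S hS hS0 hSd δ' δ h1 h2 h3
    have hk : (1 : ℝ) ≤ S.card := by exact_mod_cast hS.card_pos
    have hkd : (S.card : ℝ) ≤ d := by exact_mod_cast hSd
    have hle : ((S.card : ℝ) - 1) / S.card ≤ ((d : ℝ) - 1) / d := by
      rw [div_le_div_iff₀ (by linarith) (by linarith)]
      nlinarith
    have ha : ((S.card : ℝ) - 1) / S.card = 2 * (((S.card : ℝ) - 1) / (2 * S.card)) := by
      field_simp
    have ha0 : 0 ≤ ((S.card : ℝ) - 1) / (2 * S.card) := by apply div_nonneg <;> linarith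
    have hA := hle.trans_lt (hL1 δ (h1.trans h2) h3)
    have hB := hle.trans_lt (hL1 δ' h1 (h2.trans h3))
    rw [aux_meb d S v hS (fun i _ j _ hij => hv i j hij) _ _ (fun i hi => hLv δ i (hS0 i hi)) hA,
      aux_meb d S v hS (fun i _ j _ hij => hv i j hij) _ _ (fun i hi => hLv δ' i (hS0 i hi)) hB]
    rw [ha] at hA hB
    refine ⟨aux_mono _ _ _ ha0 hA (hmono δ' δ h1.le h2 h3), ?_⟩
    have hC := hmono 0 δ' le_rfl h1 (h2.trans h3)
    have hD : 1 - 2 * 0 * h + (0 : ℝ) ^ 2 = 1 := by ring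
    rw [hD] at hC
    have := aux_mono _ _ _ ha0 hB hC
    have hE : (S.card : ℝ) / (2 * ((S.card : ℝ) + 1)) =
        1 ^ 2 / (4 * (1 - ((S.card : ℝ) - 1) / (2 * S.card))) := by
      have : 1 - ((S.card : ℝ) - 1) / (2 * S.card) = (S.card + 1) / (2 * S.card) := by
        field_simp; ring
      rw [this]
      field_simp
      norm_num
    rw [hE]
    exact this
  refine ⟨1 / (2 * d), hdi0, fun δ' δ h1 h2 h3 => ⟨fun j hj => ?_, ?_⟩⟩
  · have hjm : j ∈ Finset.univ.erase (0 : Fin (d + 1)) := by simp [hj]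
    have hc2 : ((Finset.univ.erase (0 : Fin (d + 1))).erase j).card = d - 1 := by
      rw [Finset.card_erase_of_mem hjm, hcard]
    have := main ((Finset.univ.erase 0).erase j) (by rw [← Finset.card_pos, hc2]; omega)
      (by simp) (by omega) δ' δ h1 h2 h3
    have hset : (((Finset.univ.erase (0 : Fin (d + 1))).erase j : Finset (Fin (d + 1))) :
        Set (Fin (d + 1))) = {i | i ≠ 0 ∧ i ≠ j} := by
      ext i; simp [and_comm]
    rw [hset, hc2, Nat.cast_sub (by omega), Nat.cast_one, sub_add_cancel] at this
    exact this
  · have := main (Finset.univ.erase 0) hne (by simp) hcard.le δ' δ h1 h2 h3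
    have hset : ((Finset.univ.erase (0 : Fin (d + 1)) : Finset (Fin (d + 1))) :
        Set (Fin (d + 1))) = {i | i ≠ 0} := by
      ext i; simp
    rw [hset, hcard] at this
    exact this
end

section
/- Let S ⊆ ℝ^d be a finite point set and let f : ℝ^d → ℝ be a linear function that is injective on S (so f induces a total order on S). Let g : ℝ^d → ℝ be a C² function and let a ∈ ℝ^d be a regular point of g, i.e., ∇g(a) ≠ 0. Then there exists t₀ > 0 such that for every t with 0 < t ≤ t₀ there exists a linear isometry ρ of ℝ^d such that the similarity transformation T(x) = a + t·ρ(x − p₀), where p₀ is the point of S minimizing f, satisfies: for all x, y ∈ S, f(x) ≤ f(y) if and only if g(T(x)) ≤ g(T(y)). -/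
open Filter Topology in
lemma lin_aux {E : Type*} [NormedAddCommGroup E] [InnerProductSpace ℝ E] [CompleteSpace E]
    (f : E →L[ℝ] ℝ) (hf : f ≠ 0) (L : E →L[ℝ] ℝ) (hL : L ≠ 0) :
    ∃ ρ : E ≃ₗᵢ[ℝ] E, ∃ c : ℝ, 0 < c ∧ ∀ w, L (ρ w) = c * f w := by
  set v := (InnerProductSpace.toDual ℝ E).symm f with hv
  set G := (InnerProductSpace.toDual ℝ E).symm L with hG
  have hv0 : 0 < ‖v‖ := by simpa [hv] using hf
  have hG0 : 0 < ‖G‖ := by simpa [hG] using hL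
  have hn : ‖(‖G‖ / ‖v‖) • v‖ = ‖G‖ := by
    rw [norm_smul, Real.norm_of_nonneg (by positivity)]
    field_simp
  refine ⟨(ℝ ∙ ((‖G‖ / ‖v‖) • v - G))ᗮ.reflection, ‖G‖ / ‖v‖, by positivity, fun w => ?_⟩
  have h1 := Submodule.reflection_sub hn
  have e1 : ∀ w, L w = inner ℝ G w := fun w => by simp [hG]
  have e2 : ∀ w, f w = inner ℝ v w := fun w => by simp [hv]
  rw [e1, e2]
  nth_rewrite 1 [← h1]
  rw [LinearIsometryEquiv.inner_map_map, real_inner_smul_left]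

open Filter Topology in
lemma ev_aux {E : Type*} [NormedAddCommGroup E] [NormedSpace ℝ E]
    (g : E → ℝ) (a u w : E) (hg : DifferentiableAt ℝ g a)
    (h : fderiv ℝ g a u < fderiv ℝ g a w) :
    ∀ᶠ t : ℝ in 𝓝[>] 0, g (a + t • u) < g (a + t • w) := by
  have key : ∀ u, HasDerivAt (fun t : ℝ => g (a + t • u)) (fderiv ℝ g a u) 0 := by
    intro u
    exact hg.hasFDerivAt.hasLineDerivAt u
  have hd := ((key w).sub (key u)).tendsto_slope_zero_right
  filter_upwards [hd.eventually (lt_mem_nhds (sub_pos.2 h)), self_mem_nhdsWithin] with t ht ht0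
  simp only [Pi.sub_apply, zero_add, zero_smul, add_zero, sub_self, sub_zero, smul_eq_mul] at ht
  have := (mul_pos_iff_of_pos_left (inv_pos.2 ht0)).1 ht
  linarith

/-- Let `S ⊆ ℝ^d` be finite, `f` a linear function injective on `S`
(with `p₀` the point of `S` minimizing `f`), `g` a `C²` function and `a` a regular
point of `g`. Then for all sufficiently small scalings `t` there is a linear isometry
`ρ` such that the similarity transformation `T(x) = a + t·ρ(x − p₀)` makes `g ∘ T`
induce the same order on `S` as `f`. -/
theorem linearization_of_order (d : ℕ) (S : Set (EuclideanSpace ℝ (Fin d)))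
    (hS : S.Finite) (hne : S.Nonempty)
    (f : EuclideanSpace ℝ (Fin d) →ₗ[ℝ] ℝ) (hinj : Set.InjOn f S)
    (g : EuclideanSpace ℝ (Fin d) → ℝ) (hg : ContDiff ℝ 2 g)
    (a : EuclideanSpace ℝ (Fin d)) (ha : fderiv ℝ g a ≠ 0)
    (p₀ : EuclideanSpace ℝ (Fin d)) (hp₀ : p₀ ∈ S) (hmin : ∀ x ∈ S, f p₀ ≤ f x) :
    ∃ t₀ : ℝ, 0 < t₀ ∧ ∀ t : ℝ, 0 < t → t ≤ t₀ →
      ∃ ρ : EuclideanSpace ℝ (Fin d) ≃ₗᵢ[ℝ] EuclideanSpace ℝ (Fin d),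
        ∀ x ∈ S, ∀ y ∈ S,
          (f x ≤ f y ↔ g (a + t • ρ (x - p₀)) ≤ g (a + t • ρ (y - p₀))) := by
  by_cases hf : f = 0
  · refine ⟨1, one_pos, fun t _ _ => ⟨LinearIsometryEquiv.refl ℝ _, fun x hx y hy => ?_⟩⟩
    have : x = y := hinj hx hy (by simp [hf])
    subst this
    simp
  have hf' : LinearMap.toContinuousLinearMap f ≠ 0 := by simpa using hf
  obtain ⟨ρ, c, hc, hρ⟩ := lin_aux _ hf' _ ha
  have hev : ∀ᶠ t : ℝ in nhdsWithin 0 (Set.Ioi 0), ∀ x ∈ S, ∀ y ∈ S, f x < f y →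
      g (a + t • ρ (x - p₀)) < g (a + t • ρ (y - p₀)) := by
    refine (Filter.eventually_all_finite hS).2 fun x _ => (Filter.eventually_all_finite hS).2 fun y _ => ?_
    refine Filter.eventually_imp_distrib_left.2 fun hxy => ?_
    refine ev_aux g a _ _ (hg.differentiable (by norm_num) a) ?_
    rw [hρ, hρ]
    refine mul_lt_mul_of_pos_left ?_ hc
    simpa using hxy
  obtain ⟨t₀, ht₀, h⟩ := (mem_nhdsGT_iff_exists_Ioc_subset).1 hev
  refine ⟨t₀, ht₀, fun t h0 h1 => ⟨ρ, fun x hx y hy => ?_⟩⟩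
  have H := h ⟨h0, h1⟩
  constructor
  · intro hxy
    rcases hxy.lt_or_eq with hlt | heq
    · exact (H x hx y hy hlt).le
    · rw [hinj hx hy heq]
  · intro hle
    by_contra hcon
    exact absurd (H y hy x hx (not_le.1 hcon)) (not_lt.2 hle)
end
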